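/- Fix integers n ≥ r ≥ 1 and two nondecreasing sequences 0 ≤ α₁ ≤ ⋯ ≤ α_r and 0 ≤ β₁ ≤ ⋯ ≤ β_r of nonnegative integers, with distinct values a₁ < ⋯ < a_k of multiplicities m₁, …, m_k for α, and b₁ < ⋯ < b_l of multiplicities n₁, …, n_l for β. Consider pairs (M₀, M_∞) where M₀ ⊆ ℂ[z]^{⊕n} and M_∞ ⊆ ℂ[w]^{⊕n} are ℂ^×-invariant submodules with ℂ[z]^{⊕n}/M₀ ≅ ℂ[z]^{⊕(n−r)} ⊕ (⊕_i ℂ[z]/(z^{α_i})) and ℂ[w]^{⊕n}/M_∞ ≅ ℂ[w]^{⊕(n−r)} ⊕ (⊕_i ℂ[w]/(w^{β_i})), and such that inside the Laurent polynomial module ℂ[z, z⁻¹]^{⊕n} the submodule ℂ[z, z⁻¹]·M₀ generated by M₀ equals the submodule ℂ[z, z⁻¹]·ι(M_∞) generated by the image of M_∞ under the map ι induced by the ℂ-algebra isomorphism ℂ[w, w⁻¹] ≅ ℂ[z, z⁻¹], w ↦ z⁻¹. Then the map sending a pair of flags (V₁ ⊊ ⋯ ⊊ V_k, V′₁ ⊊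 ⋯ ⊊ V′_l) in ℂⁿ with dim V_I = m₁ + ⋯ + m_I, dim V′_J = n₁ + ⋯ + n_J and with common top space V_k = V′_l, to the pair (M_V, M_{V′}) (where M_V is generated by {z^{a_I}·v : v ∈ V_I} and M_{V′} by {w^{b_J}·v : v ∈ V′_J}), is a bijection onto the set of all such pairs (M₀, M_∞). (Theorem 2.1.9: the S¹-fixed-point component F_{α₁,…,α_r; β₁,…,β_r} of the Quot scheme is the fiber product of the two flag manifolds over Gr_r(ℂⁿ).) -/

import Mathlib

/-!
A `ℂ^×`-invariant submodule `M` of `ℂ[z]^{⊕n}` contains the homogeneous components of its elements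
(`monoVec_coeffVec_mem`), so it is `⨁_d z^d·W_d` for the increasing filtration
`W_d = {v : z^d·v ∈ M}` of `ℂⁿ` (`eq_gradedMod_filtOf`). For `M = M_V` the filtration is the flag
`V`, jumping at the exponents `a_I` (`MV_eq_gradedMod`); in particular `V_I = W_{a_I}` is recovered
from `M_V` (`filtOf_MV`).

The quotient by `⨁_d z^d·W_d` is `ℂ[z]^{⊕(n-r)} ⊕ ⨁_i ℂ[z]/(z^{α_i})` if and only if
`dim W_d = #{i : α_i ≤ d}` for all `d` (`quotient_iff`). The standard module is itself such a
quotient, for a filtration by coordinate subspaces (`exists_model`). For necessity,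
`dim Q/z^d Q = ∑_{e<d} (n - dim W_e)` depends only on the isomorphism class of the quotient `Q`
(`finrank_filt_eq`). For sufficiency, two filtrations with the same dimensions differ by an element
of `GL_n(ℂ)` (`exists_equiv_filt`), which extends to `ℂ[z]^{⊕n}`. The dimension condition says
that `W` jumps only at the `a_I` and that `V_I = W_{a_I}` is a flag of the prescribed dimensions.

Finally `z` and `w` are invertible over `ℂ[z,z⁻¹]`, so the Laurent modules generated by `M_V` and by
`ι(M_{V'})` are the extensions of the top spaces of `V` and `V'` (`span_image_MV`), and a subspace
of `ℂⁿ` is recovered from its extension by evaluating at `z = 1` (`laurentExt_injective`). Hence the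
gluing condition is the equality of the top spaces.
-/

open Polynomial

/-- Coordinatewise substitution `z ↦ t·z` on `ℂ[z]^{⊕n}`. -/
noncomputable def substVec (n : ℕ) (t : ℂ) (f : Fin n → Polynomial ℂ) : Fin n → Polynomial ℂ :=
  fun i => (f i).comp (Polynomial.C t * Polynomial.X)

/-- The `ℂ[z]`-submodule `M_V ⊆ ℂ[z]^{⊕n}` generated by the elements `z^{a_I}·v`,
`v ∈ V_I` a constant vector, for a flag `V` indexed by `Fin k` with exponents `a`. -/
noncomputable def MV (n k : ℕ) (a : Fin k → ℕ) (V : Fin k → Submodule ℂ (Fin n → ℂ)) :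
    Submodule (Polynomial ℂ) (Fin n → Polynomial ℂ) :=
  Submodule.span (Polynomial ℂ)
    (⋃ I : Fin k,
      (fun (v : Fin n → ℂ) (j : Fin n) => (Polynomial.X : Polynomial ℂ) ^ a I * Polynomial.C (v j))
        '' (V I : Set (Fin n → ℂ)))

/-- The coordinatewise inclusion `ℂ[z]^{⊕n} → ℂ[z,z⁻¹]^{⊕n}`. -/
noncomputable def laurentIncl (n : ℕ) (f : Fin n → Polynomial ℂ) :
    Fin n → LaurentPolynomial ℂ :=
  fun j => Polynomial.toLaurent (f j)

/-- The coordinatewise map `ι : ℂ[w]^{⊕n} → ℂ[z,z⁻¹]^{⊕n}` induced by `w ↦ z⁻¹`. -/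
noncomputable def laurentInv (n : ℕ) (f : Fin n → Polynomial ℂ) :
    Fin n → LaurentPolynomial ℂ :=
  fun j => Polynomial.aeval (LaurentPolynomial.T (R := ℂ) (-1)) (f j)

/-! ### Homogeneous components -/

/-- The coefficient of `z^d` in `f ∈ ℂ[z]^{⊕n}`, a vector in `ℂⁿ`. -/
noncomputable def coeffVec (n d : ℕ) : (Fin n → ℂ[X]) →ₗ[ℂ] (Fin n → ℂ) where
  toFun f j := (f j).coeff d
  map_add' f g := by ext j; simp
  map_smul' c f := by ext j; simp

/-- The map `v ↦ z^d·v` from `ℂⁿ` to `ℂ[z]^{⊕n}`. -/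
noncomputable def monoVec (n d : ℕ) : (Fin n → ℂ) →ₗ[ℂ] (Fin n → ℂ[X]) where
  toFun v j := monomial d (v j)
  map_add' f g := by ext1 j; simp
  map_smul' c f := by ext1 j; simp [smul_monomial]

lemma coeffVec_apply {n : ℕ} (d : ℕ) (f : Fin n → ℂ[X]) (j : Fin n) :
    coeffVec n d f j = (f j).coeff d := rfl

lemma monoVec_apply {n : ℕ} (d : ℕ) (v : Fin n → ℂ) (j : Fin n) :
    monoVec n d v j = monomial d (v j) := rfl

lemma monoVec_eq {n : ℕ} (d : ℕ) (v : Fin n → ℂ) :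
    (fun j => (X : ℂ[X]) ^ d * C (v j)) = monoVec n d v := by
  ext1 j
  rw [monoVec_apply, ← C_mul_X_pow_eq_monomial, mul_comm]

lemma coeffVec_monoVec {n : ℕ} (d e : ℕ) (v : Fin n → ℂ) :
    coeffVec n d (monoVec n e v) = if e = d then v else 0 := by
  ext j
  rw [coeffVec_apply, monoVec_apply, coeff_monomial]
  split_ifs <;> rfl

lemma vec_ext {n : ℕ} {f g : Fin n → ℂ[X]} (h : ∀ d, coeffVec n d f = coeffVec n d g) :
    f = g := by
  ext j d
  exact congrFun (h d) j

lemma coeffVec_smul {n : ℕ} (d : ℕ) (p : ℂ[X]) (f : Fin n → ℂ[X]) :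
    coeffVec n d (p • f) =
      ∑ x ∈ Finset.HasAntidiagonal.antidiagonal d, p.coeff x.1 • coeffVec n x.2 f := by
  ext j
  simp [coeffVec_apply, coeff_mul, Finset.sum_apply]

lemma coeffVec_X_pow_smul_add {n : ℕ} (d e : ℕ) (f : Fin n → ℂ[X]) :
    coeffVec n (e + d) ((X : ℂ[X]) ^ d • f) = coeffVec n e f := by
  ext j
  simp [coeffVec_apply, coeff_X_pow_mul]

lemma coeffVec_X_pow_smul_lt {n : ℕ} {d e : ℕ} (h : e < d) (f : Fin n → ℂ[X]) :
    coeffVec n e ((X : ℂ[X]) ^ d • f) = 0 := by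
  ext j
  simp [coeffVec_apply, coeff_X_pow_mul', h]

lemma X_pow_smul_monoVec {n : ℕ} (d e : ℕ) (v : Fin n → ℂ) :
    (X : ℂ[X]) ^ d • monoVec n e v = monoVec n (d + e) v := by
  ext1 j
  simp [monoVec_apply, X_pow_mul_monomial, add_comm]

/-- Decomposition of a vector of polynomials into homogeneous components. -/
lemma exists_sum_monoVec {n : ℕ} (f : Fin n → ℂ[X]) :
    ∃ N, f = ∑ d ∈ Finset.range N, monoVec n d (coeffVec n d f) := by
  refine ⟨(Finset.univ.sup fun j => (f j).natDegree) + 1, ?_⟩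
  ext1 j
  rw [Finset.sum_apply]
  simp only [monoVec_apply, coeffVec_apply]
  exact as_sum_range' (f j) _
    (Nat.lt_succ_of_le (Finset.le_sup (f := fun j => (f j).natDegree) (Finset.mem_univ j)))

/-! ### Graded submodules and filtrations -/

/-- The graded submodule `⨁_d z^d·W_d` of `ℂ[z]^{⊕n}` attached to an increasing filtration
`W` of `ℂⁿ`. -/
noncomputable def gradedMod {n : ℕ} (W : ℕ → Submodule ℂ (Fin n → ℂ)) (hW : Monotone W) :
    Submodule ℂ[X] (Fin n → ℂ[X]) where
  carrier := {f | ∀ d, coeffVec n d f ∈ W d}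
  add_mem' hf hg d := by rw [map_add]; exact add_mem (hf d) (hg d)
  zero_mem' d := by rw [map_zero]; exact zero_mem _
  smul_mem' p f hf d := by
    rw [coeffVec_smul]
    refine Submodule.sum_mem _ fun x hx => Submodule.smul_mem _ _ ?_
    have : x.2 ≤ d := by rw [Finset.HasAntidiagonal.mem_antidiagonal] at hx; omega
    exact hW this (hf _)

lemma mem_gradedMod {n : ℕ} {W : ℕ → Submodule ℂ (Fin n → ℂ)} {hW : Monotone W}
    {f : Fin n → ℂ[X]} : f ∈ gradedMod W hW ↔ ∀ d, coeffVec n d f ∈ W d := Iff.rfl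

lemma monoVec_mem_gradedMod {n : ℕ} {W : ℕ → Submodule ℂ (Fin n → ℂ)} {hW : Monotone W}
    {d : ℕ} {v : Fin n → ℂ} : monoVec n d v ∈ gradedMod W hW ↔ v ∈ W d := by
  rw [mem_gradedMod]
  constructor
  · intro h
    simpa [coeffVec_monoVec] using h d
  · intro h e
    rw [coeffVec_monoVec]
    split_ifs with he
    · exact he ▸ h
    · exact zero_mem _

/-- The filtration of `ℂⁿ` whose `d`-th step is `{v : z^d·v ∈ M}`. -/
noncomputable def filtOf {n : ℕ} (M : Submodule ℂ[X] (Fin n → ℂ[X])) (d : ℕ) :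
    Submodule ℂ (Fin n → ℂ) :=
  (M.restrictScalars ℂ).comap (monoVec n d)

lemma mem_filtOf {n : ℕ} {M : Submodule ℂ[X] (Fin n → ℂ[X])} {d : ℕ} {v : Fin n → ℂ} :
    v ∈ filtOf M d ↔ monoVec n d v ∈ M := Iff.rfl

lemma filtOf_mono {n : ℕ} (M : Submodule ℂ[X] (Fin n → ℂ[X])) : Monotone (filtOf M) := by
  intro d e hde v hv
  rw [mem_filtOf] at hv ⊢
  have := M.smul_mem (X ^ (e - d)) hv
  rwa [X_pow_smul_monoVec, Nat.sub_add_cancel hde] at this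

lemma filtOf_gradedMod {n : ℕ} (W : ℕ → Submodule ℂ (Fin n → ℂ)) (hW : Monotone W) (d : ℕ) :
    filtOf (gradedMod W hW) d = W d := by
  ext v
  rw [mem_filtOf, monoVec_mem_gradedMod]

/-! ### Invariance under the torus -/

lemma coeffVec_substVec {n : ℕ} (t : ℂ) (d : ℕ) (f : Fin n → ℂ[X]) :
    coeffVec n d (substVec n t f) = t ^ d • coeffVec n d f := by
  ext j
  rw [coeffVec_apply, substVec, comp_C_mul_X_coeff, Pi.smul_apply, coeffVec_apply, smul_eq_mul,
    mul_comm]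

lemma substVec_gradedMod {n : ℕ} (W : ℕ → Submodule ℂ (Fin n → ℂ)) (hW : Monotone W)
    (t : ℂ) (ht : t ≠ 0) :
    substVec n t '' (gradedMod W hW : Set (Fin n → ℂ[X])) = gradedMod W hW := by
  have key : ∀ s : ℂ, ∀ f ∈ gradedMod W hW, substVec n s f ∈ gradedMod W hW := by
    intro s f hf d
    rw [coeffVec_substVec]
    exact Submodule.smul_mem _ _ (hf d)
  ext f
  constructor
  · rintro ⟨g, hg, rfl⟩
    exact key t g hg
  · intro hf
    refine ⟨substVec n t⁻¹ f, key _ f hf, vec_ext fun d => ?_⟩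
    rw [coeffVec_substVec, coeffVec_substVec, smul_smul, ← mul_pow, mul_inv_cancel₀ ht,
      one_pow, one_smul]

/-- A `ℂ^×`-invariant submodule contains the homogeneous components of its elements: a linear
functional vanishing on `M` but not on a component would give a nonzero polynomial in `t`
vanishing at all `t ≠ 0`. -/
lemma monoVec_coeffVec_mem {n : ℕ} (M : Submodule ℂ[X] (Fin n → ℂ[X]))
    (hM : ∀ t : ℂ, t ≠ 0 → substVec n t '' (M : Set (Fin n → ℂ[X])) = M)
    {f : Fin n → ℂ[X]} (hf : f ∈ M) (d : ℕ) : monoVec n d (coeffVec n d f) ∈ M := by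
  by_contra hd
  obtain ⟨ψ, hψd, hψ⟩ := Submodule.exists_le_ker_of_notMem (p := M.restrictScalars ℂ) hd
  obtain ⟨N, hN⟩ := exists_sum_monoVec f
  have hsub : ∀ t : ℂ, substVec n t f =
      ∑ e ∈ Finset.range N, t ^ e • monoVec n e (coeffVec n e f) := by
    intro t
    refine vec_ext fun e => ?_
    rw [coeffVec_substVec]
    conv_lhs => rw [hN]
    simp only [map_sum, map_smul, Finset.smul_sum]
    refine Finset.sum_congr rfl fun i _ => ?_
    rw [coeffVec_monoVec]
    split_ifs with h
    · rw [h]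
    · simp
  let P : ℂ[X] := ∑ e ∈ Finset.range N, monomial e (ψ (monoVec n e (coeffVec n e f)))
  have hP : P = 0 := by
    refine Polynomial.eq_zero_of_infinite_isRoot _ (Set.Infinite.mono (s := {0}ᶜ) ?_
      (Set.finite_singleton (0 : ℂ)).infinite_compl)
    intro t ht
    have hmem : substVec n t f ∈ M := by
      have h1 : substVec n t f ∈ substVec n t '' (M : Set (Fin n → ℂ[X])) := ⟨f, hf, rfl⟩
      rw [hM t ht] at h1
      exact h1
    have h0 : ψ (substVec n t f) = 0 := hψ hmem
    rw [hsub] at h0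
    simp only [P, Set.mem_ofPred_eq, IsRoot, eval_finsetSum, eval_monomial]
    rw [← h0, map_sum]
    exact Finset.sum_congr rfl fun i _ => by rw [map_smul, smul_eq_mul, mul_comm]
  have hc : P.coeff d = 0 := by rw [hP, coeff_zero]
  simp only [P, finsetSum_coeff, coeff_monomial, Finset.sum_ite_eq', Finset.mem_range] at hc
  split_ifs at hc with hdN
  · exact hψd hc
  · apply hψd
    have : coeffVec n d f = 0 := by
      rw [hN, map_sum]
      refine Finset.sum_eq_zero fun i hi => ?_
      rw [coeffVec_monoVec, if_neg]
      rw [Finset.mem_range] at hi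
      omega
    rw [this, map_zero, map_zero]

lemma eq_gradedMod_filtOf {n : ℕ} (M : Submodule ℂ[X] (Fin n → ℂ[X]))
    (hM : ∀ t : ℂ, t ≠ 0 → substVec n t '' (M : Set (Fin n → ℂ[X])) = M) :
    M = gradedMod (filtOf M) (filtOf_mono M) := by
  ext f
  constructor
  · intro hf d
    exact monoVec_coeffVec_mem M hM hf d
  · intro hf
    obtain ⟨N, hN⟩ := exists_sum_monoVec f
    rw [hN]
    exact Submodule.sum_mem _ fun d _ => hf d

/-! ### The filtration of a flag -/

/-- The filtration of `ℂⁿ` attached to a flag `V` with jumps `a`: its `d`-th step is the sum of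
the `V I` with `a I ≤ d`, hence zero below all the jumps. -/
noncomputable def flagFilt {n k : ℕ} (a : Fin k → ℕ) (V : Fin k → Submodule ℂ (Fin n → ℂ))
    (d : ℕ) : Submodule ℂ (Fin n → ℂ) := ⨆ I, ⨆ _ : a I ≤ d, V I

lemma flagFilt_mono {n k : ℕ} (a : Fin k → ℕ) (V : Fin k → Submodule ℂ (Fin n → ℂ)) :
    Monotone (flagFilt a V) := fun _ _ hde =>
  iSup_mono fun _ => iSup_mono' fun h => ⟨h.trans hde, le_rfl⟩

lemma monoVec_mem_MV {n k : ℕ} (a : Fin k → ℕ) (V : Fin k → Submodule ℂ (Fin n → ℂ))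
    {I : Fin k} {v : Fin n → ℂ} (hv : v ∈ V I) : monoVec n (a I) v ∈ MV n k a V :=
  Submodule.subset_span (Set.mem_iUnion.2 ⟨I, v, hv, monoVec_eq _ _⟩)

lemma MV_le {n k : ℕ} (a : Fin k → ℕ) (V : Fin k → Submodule ℂ (Fin n → ℂ))
    {M : Submodule ℂ[X] (Fin n → ℂ[X])} (h : ∀ I, ∀ v ∈ V I, monoVec n (a I) v ∈ M) :
    MV n k a V ≤ M := by
  refine Submodule.span_le.2 (Set.iUnion_subset fun I => ?_)
  rintro _ ⟨v, hv, rfl⟩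
  simp only [monoVec_eq]
  exact h I v hv

lemma MV_eq_gradedMod {n k : ℕ} (a : Fin k → ℕ) (V : Fin k → Submodule ℂ (Fin n → ℂ)) :
    MV n k a V = gradedMod (flagFilt a V) (flagFilt_mono a V) := by
  apply le_antisymm
  · refine MV_le a V fun I v hv => ?_
    rw [monoVec_mem_gradedMod]
    exact Submodule.mem_iSup_of_mem I (Submodule.mem_iSup_of_mem le_rfl hv)
  · intro f hf
    obtain ⟨N, hN⟩ := exists_sum_monoVec f
    rw [hN]
    refine Submodule.sum_mem _ fun d _ => ?_
    have hle : flagFilt a V d ≤ filtOf (MV n k a V) d :=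
      iSup₂_le fun I hI v hv => filtOf_mono _ hI (monoVec_mem_MV a V hv)
    exact hle (hf d)

lemma flagFilt_apply {n k : ℕ} {a : Fin k → ℕ} (ha : StrictMono a)
    {V : Fin k → Submodule ℂ (Fin n → ℂ)} (hV : Monotone V) {I : Fin k} {d : ℕ}
    (h : ∀ J, a J ≤ d ↔ a J ≤ a I) : flagFilt a V d = V I := by
  apply le_antisymm
  · exact iSup₂_le fun J hJ => hV (ha.le_iff_le.1 ((h J).1 hJ))
  · exact le_iSup₂_of_le I ((h I).2 le_rfl) le_rfl

/-! ### The dimensions of the filtration are invariants of the quotient -/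

/-- The filtration which agrees with `W` in degrees below `d` and is everything from `d` on. -/
noncomputable def truncFilt {n : ℕ} (W : ℕ → Submodule ℂ (Fin n → ℂ)) (d e : ℕ) :
    Submodule ℂ (Fin n → ℂ) := if e < d then W e else ⊤

lemma truncFilt_mono {n : ℕ} {W : ℕ → Submodule ℂ (Fin n → ℂ)} (hW : Monotone W) (d : ℕ) :
    Monotone (truncFilt W d) := by
  intro e e' h
  unfold truncFilt
  split_ifs with h1 h2
  · exact hW h
  · exact le_top
  · omega
  · exact le_rfl

lemma mem_gradedMod_truncFilt {n : ℕ} {W : ℕ → Submodule ℂ (Fin n → ℂ)} (hW : Monotone W)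
    {d : ℕ} {f : Fin n → ℂ[X]} :
    f ∈ gradedMod (truncFilt W d) (truncFilt_mono hW d) ↔ ∀ e < d, coeffVec n e f ∈ W e := by
  rw [mem_gradedMod]
  refine forall_congr' fun e => ?_
  unfold truncFilt
  split_ifs with h <;> simp [h]

lemma finrank_trunc {n : ℕ} (W : ℕ → Submodule ℂ (Fin n → ℂ)) (hW : Monotone W) (d : ℕ) :
    Module.finrank ℂ ((Fin n → ℂ[X]) ⧸ gradedMod (truncFilt W d) (truncFilt_mono hW d)) =
      ∑ e ∈ Finset.range d, (n - Module.finrank ℂ (W e)) := by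
  let χ : (Fin n → ℂ[X]) →ₗ[ℂ] ((e : Fin d) → (Fin n → ℂ) ⧸ W e) :=
    LinearMap.pi fun e => (W e).mkQ ∘ₗ coeffVec n e
  have hker : LinearMap.ker χ =
      (gradedMod (truncFilt W d) (truncFilt_mono hW d)).restrictScalars ℂ := by
    ext f
    rw [Submodule.restrictScalars_mem, mem_gradedMod_truncFilt hW, LinearMap.mem_ker, funext_iff]
    simp only [χ, LinearMap.pi_apply, LinearMap.comp_apply, Submodule.mkQ_apply, Pi.zero_apply,
      Submodule.Quotient.mk_eq_zero]
    exact ⟨fun h e he => h ⟨e, he⟩, fun h e => h e e.2⟩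
  have hsurj : Function.Surjective χ := by
    intro q
    choose v hv using fun e => (W (e : Fin d)).mkQ_surjective (q e)
    refine ⟨∑ e : Fin d, monoVec n e (v e), ?_⟩
    ext1 e
    simp only [χ, LinearMap.pi_apply, LinearMap.comp_apply, map_sum, coeffVec_monoVec]
    rw [← hv e, Finset.sum_eq_single e]
    · simp
    · intro e' _ he'
      rw [if_neg (fun h => he' (Fin.ext h)), map_zero]
    · simp
  rw [← (Submodule.Quotient.restrictScalarsEquiv ℂ _).finrank_eq, ← hker,
    (χ.quotKerEquivOfSurjective hsurj).finrank_eq, Module.finrank_pi_fintype,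
    Finset.sum_range]
  refine Finset.sum_congr rfl fun e _ => ?_
  rw [Submodule.finrank_quotient]
  simp

/-- If `S ≅ ℂ[z]^{⊕n} / ⨁_e z^e·W_e`, then `S / z^d S` is the quotient of `ℂ[z]^{⊕n}` by the
graded submodule of the truncated filtration. -/
lemma nonempty_trunc_equiv {n : ℕ} {S : Type} [AddCommGroup S] [Module ℂ[X] S]
    (W : ℕ → Submodule ℂ (Fin n → ℂ)) (hW : Monotone W) (ψ : (Fin n → ℂ[X]) →ₗ[ℂ[X]] S)
    (hψ : Function.Surjective ψ) (hker : LinearMap.ker ψ = gradedMod W hW) (d : ℕ) :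
    Nonempty (((Fin n → ℂ[X]) ⧸ gradedMod (truncFilt W d) (truncFilt_mono hW d)) ≃ₗ[ℂ[X]]
      (S ⧸ LinearMap.range (LinearMap.lsmul ℂ[X] S (X ^ d)))) := by
  let χ := (LinearMap.range (LinearMap.lsmul ℂ[X] S (X ^ d))).mkQ ∘ₗ ψ
  have hχ : Function.Surjective χ := (Submodule.mkQ_surjective _).comp hψ
  have hk : LinearMap.ker χ = gradedMod (truncFilt W d) (truncFilt_mono hW d) := by
    ext f
    rw [mem_gradedMod_truncFilt hW, LinearMap.mem_ker]
    simp only [χ, LinearMap.comp_apply, Submodule.mkQ_apply, Submodule.Quotient.mk_eq_zero,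
      LinearMap.mem_range, LinearMap.lsmul_apply]
    constructor
    · rintro ⟨s, hs⟩ e he
      obtain ⟨g, rfl⟩ := hψ s
      have hmem : f - (X : ℂ[X]) ^ d • g ∈ gradedMod W hW := by
        rw [← hker, LinearMap.mem_ker, map_sub, map_smul, hs, sub_self]
      have := hmem e
      rwa [map_sub, coeffVec_X_pow_smul_lt he, sub_zero] at this
    · intro h
      -- `g` is `f` with its terms of degree below `d` removed, divided by `z^d`.
      let g : Fin n → ℂ[X] := fun j => Polynomial.divX^[d] (f j)
      have hg : ∀ e, coeffVec n e g = coeffVec n (e + d) f := by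
        intro e
        ext j
        simp only [coeffVec_apply, g]
        generalize f j = p
        clear h g hχ χ
        induction d generalizing p with
        | zero => rfl
        | succ d ih => rw [Function.iterate_succ_apply, ih, coeff_divX, add_assoc]
      refine ⟨ψ g, ?_⟩
      rw [← map_smul, eq_comm, ← sub_eq_zero, ← map_sub, ← LinearMap.mem_ker, hker]
      intro e
      rw [map_sub]
      by_cases he : e < d
      · rw [coeffVec_X_pow_smul_lt he, sub_zero]
        exact h e he
      · obtain ⟨c, rfl⟩ := Nat.exists_eq_add_of_le' (not_lt.1 he)
        rw [coeffVec_X_pow_smul_add, hg, sub_self]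
        exact zero_mem _
  exact ⟨(Submodule.quotEquivOfEq _ _ hk.symm).trans (χ.quotKerEquivOfSurjective hχ)⟩

/-- The dimensions of the steps of `W` are determined by the isomorphism class of the quotient. -/
lemma finrank_filt_eq {n : ℕ} {S : Type} [AddCommGroup S] [Module ℂ[X] S]
    (W : ℕ → Submodule ℂ (Fin n → ℂ)) (hW : Monotone W) (ψ : (Fin n → ℂ[X]) →ₗ[ℂ[X]] S)
    (hψ : Function.Surjective ψ) (hker : LinearMap.ker ψ = gradedMod W hW)
    (W' : ℕ → Submodule ℂ (Fin n → ℂ)) (hW' : Monotone W') (ψ' : (Fin n → ℂ[X]) →ₗ[ℂ[X]] S)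
    (hψ' : Function.Surjective ψ') (hker' : LinearMap.ker ψ' = gradedMod W' hW') (d : ℕ) :
    Module.finrank ℂ (W d) = Module.finrank ℂ (W' d) := by
  have key : ∀ d, ∑ e ∈ Finset.range d, (n - Module.finrank ℂ (W e)) =
      ∑ e ∈ Finset.range d, (n - Module.finrank ℂ (W' e)) := by
    intro d
    obtain ⟨φ⟩ := nonempty_trunc_equiv W hW ψ hψ hker d
    obtain ⟨φ'⟩ := nonempty_trunc_equiv W' hW' ψ' hψ' hker' d
    rw [← finrank_trunc W hW, ← finrank_trunc W' hW']
    exact ((φ.trans φ'.symm).restrictScalars ℂ).finrank_eq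
  have h1 := key d
  have h2 := key (d + 1)
  rw [Finset.sum_range_succ, Finset.sum_range_succ] at h2
  have h3 := (W d).finrank_le
  have h4 := (W' d).finrank_le
  rw [Module.finrank_fin_fun] at h3 h4
  omega

/-! ### Sufficiency of the dimensions -/

/-- Finite filtrations with the same dimensions are conjugate under the general linear group. -/
lemma exists_equiv_filt_lt (N : ℕ) : ∀ (V : Type) [AddCommGroup V] [Module ℂ V]
    [FiniteDimensional ℂ V] (W W' : ℕ → Submodule ℂ V), Monotone W → Monotone W' →
    (∀ e < N, Module.finrank ℂ (W e) = Module.finrank ℂ (W' e)) →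
    ∃ g : V ≃ₗ[ℂ] V, ∀ e < N, ∀ x, x ∈ W e ↔ g x ∈ W' e := by
  induction N with
  | zero => intro V _ _ _ W W' _ _ _; exact ⟨LinearEquiv.refl ℂ V, by simp⟩
  | succ N ih =>
    intro V _ _ _ W W' hW hW' hd
    let h : W N ≃ₗ[ℂ] W' N := LinearEquiv.ofFinrankEq _ _ (hd N (Nat.lt_succ_self N))
    obtain ⟨k, hk⟩ := ih (W N) (fun e => (W e).comap (W N).subtype)
      (fun e => ((W' e).comap (W' N).subtype).comap (h : W N →ₗ[ℂ] W' N))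
      (fun e e' he => Submodule.comap_mono (hW he))
      (fun e e' he => Submodule.comap_mono (Submodule.comap_mono (hW' he)))
      (by
        intro e he
        have he' := he.le
        rw [(Submodule.comapSubtypeEquivOfLe (hW he')).finrank_eq, hd e (by omega),
          Submodule.comap_equiv_eq_map_symm, LinearEquiv.finrank_map_eq,
          (Submodule.comapSubtypeEquivOfLe (hW' he')).finrank_eq])
    obtain ⟨g, hg⟩ := Submodule.exists_linearEquiv_restrict_eq (k.trans h)
    -- `g` extends `h ∘ k`, so it maps `W N` onto `W' N`.
    have hN : ∀ x, g x ∈ W' N → x ∈ W N := by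
      intro x hx
      have h1 := hg ((k.trans h).symm ⟨g x, hx⟩)
      rw [LinearEquiv.apply_symm_apply] at h1
      rw [g.injective h1]
      exact Subtype.prop _
    have hN' : ∀ x ∈ W N, g x ∈ W' N := fun x hx => by
      rw [← hg ⟨x, hx⟩]; exact Subtype.prop _
    have hlt : ∀ e < N, ∀ x ∈ W N, (x ∈ W e ↔ g x ∈ W' e) := by
      intro e he x hx
      rw [← hg ⟨x, hx⟩]
      exact hk e he ⟨x, hx⟩
    refine ⟨g, fun e he x => ?_⟩
    rcases Nat.lt_succ_iff_lt_or_eq.1 he with he | rfl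
    · exact ⟨fun hx => (hlt e he x (hW he.le hx)).1 hx,
        fun hx => (hlt e he x (hN x (hW' he.le hx))).2 hx⟩
    · exact ⟨hN' x, hN x⟩

lemma exists_equiv_filt {n : ℕ} (W W' : ℕ → Submodule ℂ (Fin n → ℂ)) (hW : Monotone W)
    (hW' : Monotone W') (hd : ∀ e, Module.finrank ℂ (W e) = Module.finrank ℂ (W' e)) :
    ∃ g : (Fin n → ℂ) ≃ₗ[ℂ] (Fin n → ℂ), ∀ e x, x ∈ W e ↔ g x ∈ W' e := by
  obtain ⟨N, hN⟩ := monotone_stabilizes_iff_noetherian.2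
    (inferInstance : IsNoetherian ℂ (Fin n → ℂ)) ⟨W, hW⟩
  obtain ⟨N', hN'⟩ := monotone_stabilizes_iff_noetherian.2
    (inferInstance : IsNoetherian ℂ (Fin n → ℂ)) ⟨W', hW'⟩
  simp only [OrderHom.coe_mk] at hN hN'
  obtain ⟨g, hg⟩ := exists_equiv_filt_lt (max N N' + 1) _ W W' hW hW' fun e _ => hd e
  refine ⟨g, fun e x => ?_⟩
  by_cases he : e < max N N' + 1
  · exact hg e he x
  · rw [← hN e (by omega), ← hN' e (by omega), hN _ (le_max_left N N'),
      hN' _ (le_max_right N N')]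
    exact hg _ (Nat.lt_succ_self _) x

/-- A `ℂ`-linear endomorphism of `ℂⁿ` extends `ℂ[z]`-linearly to `ℂ[z]^{⊕n}`. -/
lemma exists_extend_scalars {n : ℕ} (g : (Fin n → ℂ) →ₗ[ℂ] (Fin n → ℂ)) :
    ∃ G : (Fin n → ℂ[X]) →ₗ[ℂ[X]] (Fin n → ℂ[X]),
      ∀ f d, coeffVec n d (G f) = g (coeffVec n d f) := by
  refine ⟨Matrix.toLin' ((LinearMap.toMatrix' g).map C), fun f d => ?_⟩
  conv_rhs => rw [← Matrix.toLin'_toMatrix' g]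
  ext i
  rw [coeffVec_apply, Matrix.toLin'_apply, Matrix.toLin'_apply]
  simp only [Matrix.mulVec, dotProduct, finsetSum_coeff, Matrix.map_apply, coeff_C_mul,
    coeffVec_apply]

/-- The standard module `ℂ[z]^{⊕(n-r)} ⊕ ⨁_i ℂ[z]/(z^{α_i})` is the quotient of `ℂ[z]^{⊕n}` by the
graded submodule of a filtration by coordinate subspaces, whose `d`-th step is spanned by the
basis vectors of weight at most `d`. -/
lemma exists_model (n r : ℕ) (hrn : r ≤ n) (α : Fin r → ℕ) :
    ∃ (W : ℕ → Submodule ℂ (Fin n → ℂ)) (hW : Monotone W)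
      (ψ : (Fin n → ℂ[X]) →ₗ[ℂ[X]] ((Fin (n - r) → ℂ[X]) ×
        ((i : Fin r) → ℂ[X] ⧸ Ideal.span {(X : ℂ[X]) ^ α i}))),
      Function.Surjective ψ ∧ LinearMap.ker ψ = gradedMod W hW ∧
      ∀ d, Module.finrank ℂ (W d) = (Finset.univ.filter fun i : Fin r => α i ≤ d).card := by
  classical
  let ε : Fin r ⊕ Fin (n - r) ≃ Fin n :=
    finSumFinEquiv.trans (finCongr (Nat.add_sub_cancel' hrn))
  -- the free summands have infinite weight
  let wt : Fin n → ℕ∞ := fun x => Sum.elim (fun i => (α i : ℕ∞)) (fun _ => ⊤) (ε.symm x)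
  let W : ℕ → Submodule ℂ (Fin n → ℂ) := fun d =>
    ⨅ x ∈ {x | (d : ℕ∞) < wt x}, LinearMap.ker (LinearMap.proj x : (Fin n → ℂ) →ₗ[ℂ] ℂ)
  have hmem : ∀ d v, v ∈ W d ↔ (∀ i, d < α i → v (ε (Sum.inl i)) = 0) ∧
      ∀ j, v (ε (Sum.inr j)) = 0 := by
    intro d v
    simp only [W, Submodule.mem_iInf, LinearMap.mem_ker, LinearMap.proj_apply]
    rw [← ε.forall_congr_right, Sum.forall]
    simp [wt]
  have hW : Monotone W := by
    intro d e hde v hv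
    rw [hmem] at hv ⊢
    exact ⟨fun i hi => hv.1 i (hde.trans_lt hi), hv.2⟩
  let ψ : (Fin n → ℂ[X]) →ₗ[ℂ[X]] ((Fin (n - r) → ℂ[X]) ×
        ((i : Fin r) → ℂ[X] ⧸ Ideal.span {(X : ℂ[X]) ^ α i})) :=
    LinearMap.prod (LinearMap.pi fun j => LinearMap.proj (ε (Sum.inr j)))
      (LinearMap.pi fun i => (Ideal.span {(X : ℂ[X]) ^ α i}).mkQ ∘ₗ
        LinearMap.proj (ε (Sum.inl i)))
  refine ⟨W, hW, ψ, ?_, ?_, ?_⟩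
  · rintro ⟨p, q⟩
    choose u hu using fun i => (Ideal.span {(X : ℂ[X]) ^ α i}).mkQ_surjective (q i)
    refine ⟨fun x => Sum.elim u p (ε.symm x), ?_⟩
    ext1
    · ext1 j
      simp [ψ]
    · ext1 i
      simp only [ψ, LinearMap.prod_apply, Function.prod_apply, LinearMap.pi_apply, LinearMap.comp_apply,
        LinearMap.proj_apply, Equiv.symm_apply_apply, Sum.elim_inl]
      exact hu i
  · ext f
    simp only [mem_gradedMod, hmem, LinearMap.mem_ker, ψ, LinearMap.prod_apply, Function.prod_apply,
      Prod.mk_eq_zero, funext_iff, LinearMap.pi_apply, LinearMap.comp_apply,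
        LinearMap.proj_apply, Pi.zero_apply, Submodule.mkQ_apply, Submodule.Quotient.mk_eq_zero,
        Ideal.mem_span_singleton, X_pow_dvd_iff, coeffVec_apply, Polynomial.ext_iff, coeff_zero]
    exact ⟨fun h d => ⟨fun i hi => h.2 i d hi, fun j => h.1 j d⟩,
      fun h => ⟨fun j d => (h d).2 j, fun i d hi => (h d).1 i hi⟩⟩
  · intro d
    have hfin := (LinearMap.iInfKerProjEquiv ℂ (fun _ : Fin n => ℂ)
      (I := {x | wt x ≤ (d : ℕ∞)}) (J := {x | (d : ℕ∞) < wt x})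
      (Set.disjoint_left.2 fun x (h1 : wt x ≤ d) (h2 : (d : ℕ∞) < wt x) => not_lt.2 h1 h2)
      (fun x _ => le_or_gt (wt x) d)).finrank_eq
    rw [Module.finrank_fintype_fun_eq_card] at hfin
    refine hfin.trans ?_
    rw [← Fintype.card_subtype]
    refine (Fintype.card_congr (Equiv.ofBijective
      (fun i : {i : Fin r // α i ≤ d} => (⟨ε (Sum.inl i.1), by simp [wt, i.2]⟩ :
        {x | wt x ≤ (d : ℕ∞)})) ⟨?_, ?_⟩)).symm
    · intro i i' h
      have := ε.injective (congrArg Subtype.val h)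
      exact Subtype.ext (Sum.inl_injective this)
    · rintro ⟨x, hx⟩
      obtain ⟨y, rfl⟩ := ε.surjective x
      rcases y with i | j
      · exact ⟨⟨i, by simpa [wt] using hx⟩, rfl⟩
      · simp [wt] at hx

/-- The quotient by a graded submodule is standard of type `α` exactly when the filtration has
the right dimensions. -/
lemma quotient_iff {n r : ℕ} (hrn : r ≤ n) (α : Fin r → ℕ)
    (W : ℕ → Submodule ℂ (Fin n → ℂ)) (hW : Monotone W) :
    Nonempty (((Fin n → ℂ[X]) ⧸ gradedMod W hW) ≃ₗ[ℂ[X]] ((Fin (n - r) → ℂ[X]) ×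
        ((i : Fin r) → ℂ[X] ⧸ Ideal.span {(X : ℂ[X]) ^ α i}))) ↔
      ∀ d, Module.finrank ℂ (W d) = (Finset.univ.filter fun i : Fin r => α i ≤ d).card := by
  obtain ⟨W', hW', ψ, hψ, hker, hdim⟩ := exists_model n r hrn α
  constructor
  · rintro ⟨φ⟩ d
    rw [← hdim d]
    refine finrank_filt_eq W hW (φ.toLinearMap ∘ₗ (gradedMod W hW).mkQ)
      (φ.surjective.comp (Submodule.mkQ_surjective _)) ?_ W' hW' ψ hψ hker d
    rw [LinearEquiv.ker_comp, Submodule.ker_mkQ]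
  · intro h
    obtain ⟨g, hg⟩ := exists_equiv_filt W W' hW hW' fun d => (h d).trans (hdim d).symm
    obtain ⟨G, hG⟩ := exists_extend_scalars (g : (Fin n → ℂ) →ₗ[ℂ] (Fin n → ℂ))
    obtain ⟨G', hG'⟩ := exists_extend_scalars (g.symm : (Fin n → ℂ) →ₗ[ℂ] (Fin n → ℂ))
    have hGs : Function.Surjective G := fun f => ⟨G' f, vec_ext fun d => by
      rw [hG, hG']; simp⟩
    have hk : LinearMap.ker (ψ ∘ₗ G) = gradedMod W hW := by
      rw [LinearMap.ker_comp, hker]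
      ext f
      rw [Submodule.mem_comap, mem_gradedMod, mem_gradedMod]
      refine forall_congr' fun d => ?_
      rw [hG, hg d]
      rfl
    exact ⟨(Submodule.quotEquivOfEq _ _ hk.symm).trans
      ((ψ ∘ₗ G).quotKerEquivOfSurjective (hψ.comp hGs))⟩

/-! ### Flags and submodules of type `α` -/

lemma sum_mult_eq_card {r k : ℕ} (α : Fin r → ℕ) (a : Fin k → ℕ) (ha : StrictMono a)
    (m : Fin k → ℕ) (hrange : Set.range α = Set.range a)
    (hm : ∀ I : Fin k, m I = (Finset.univ.filter fun i : Fin r => α i = a I).card) (I : Fin k) :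
    ∑ J ∈ Finset.univ.filter (fun J : Fin k => J ≤ I), m J =
      (Finset.univ.filter fun i : Fin r => α i ≤ a I).card := by
  classical
  simp only [hm]
  rw [← Finset.card_biUnion]
  · congr 1
    ext i
    simp only [Finset.mem_biUnion, Finset.mem_filter, Finset.mem_univ, true_and]
    constructor
    · rintro ⟨J, hJ, h⟩
      rw [h]
      exact ha.monotone hJ
    · intro h
      obtain ⟨J, hJ⟩ : α i ∈ Set.range a := hrange ▸ Set.mem_range_self i
      exact ⟨J, ha.le_iff_le.1 (hJ ▸ h), hJ.symm⟩
  · intro J _ J' _ hJ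
    refine Finset.disjoint_left.2 fun i h1 h2 => hJ (ha.injective ?_)
    simp only [Finset.mem_filter, Finset.mem_univ, true_and] at h1 h2
    rw [← h1, h2]

lemma finrank_flagFilt {n r k : ℕ} (α : Fin r → ℕ) (a : Fin k → ℕ) (ha : StrictMono a)
    (m : Fin k → ℕ) (hrange : Set.range α = Set.range a)
    (hm : ∀ I : Fin k, m I = (Finset.univ.filter fun i : Fin r => α i = a I).card)
    (V : Fin k → Submodule ℂ (Fin n → ℂ)) (hV : Monotone V)
    (hdim : ∀ I : Fin k, Module.finrank ℂ (V I)
      = ∑ J ∈ Finset.univ.filter (fun J : Fin k => J ≤ I), m J) (d : ℕ) :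
    Module.finrank ℂ (flagFilt a V d) =
      (Finset.univ.filter fun i : Fin r => α i ≤ d).card := by
  have hα : ∀ i, ∃ J, a J = α i := fun i => by
    have : α i ∈ Set.range a := hrange ▸ Set.mem_range_self i
    exact this
  by_cases hne : ∃ I, a I ≤ d
  · -- `I` is the last index with `a I ≤ d`
    obtain ⟨I, hI⟩ := (Set.toFinite {I : Fin k | a I ≤ d}).exists_maximal hne
    have h : ∀ J, a J ≤ d ↔ a J ≤ a I := by
      intro J
      refine ⟨fun hJ => ha.monotone ?_, fun hJ => hJ.trans hI.1⟩
      rcases le_total J I with h | h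
      · exact h
      · exact hI.2 hJ h
    rw [flagFilt_apply ha hV h, hdim, sum_mult_eq_card α a ha m hrange hm]
    congr 1
    ext i
    obtain ⟨J, hJ⟩ := hα i
    simp only [Finset.mem_filter, Finset.mem_univ, true_and, ← hJ]
    exact (h J).symm
  · push Not at hne
    have h0 : flagFilt a V d = ⊥ := by
      rw [eq_bot_iff]
      exact iSup₂_le fun I hI => absurd hI (not_le.2 (hne I))
    rw [h0, finrank_bot, eq_comm, Finset.card_eq_zero, Finset.filter_eq_empty_iff]
    intro i _
    obtain ⟨J, hJ⟩ := hα i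
    rw [← hJ, not_le]
    exact hne J

lemma substVec_MV {n k : ℕ} (a : Fin k → ℕ) (V : Fin k → Submodule ℂ (Fin n → ℂ)) (t : ℂ)
    (ht : t ≠ 0) :
    substVec n t '' (MV n k a V : Set (Fin n → ℂ[X])) = MV n k a V := by
  rw [MV_eq_gradedMod]
  exact substVec_gradedMod _ _ t ht

lemma quotient_MV {n r k : ℕ} (hrn : r ≤ n) (α : Fin r → ℕ) (a : Fin k → ℕ) (ha : StrictMono a)
    (m : Fin k → ℕ) (hrange : Set.range α = Set.range a)
    (hm : ∀ I : Fin k, m I = (Finset.univ.filter fun i : Fin r => α i = a I).card)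
    (V : Fin k → Submodule ℂ (Fin n → ℂ)) (hV : Monotone V)
    (hdim : ∀ I : Fin k, Module.finrank ℂ (V I)
      = ∑ J ∈ Finset.univ.filter (fun J : Fin k => J ≤ I), m J) :
    Nonempty (((Fin n → ℂ[X]) ⧸ MV n k a V) ≃ₗ[ℂ[X]] ((Fin (n - r) → ℂ[X]) ×
        ((i : Fin r) → ℂ[X] ⧸ Ideal.span {(X : ℂ[X]) ^ α i}))) := by
  rw [MV_eq_gradedMod]
  exact (quotient_iff hrn α _ _).2 (finrank_flagFilt α a ha m hrange hm V hV hdim)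

/-- A `ℂ^×`-invariant submodule with quotient of type `α` comes from a flag. -/
lemma exists_flag {n r k : ℕ} (hrn : r ≤ n) (α : Fin r → ℕ) (a : Fin k → ℕ) (ha : StrictMono a)
    (m : Fin k → ℕ) (hrange : Set.range α = Set.range a)
    (hm : ∀ I : Fin k, m I = (Finset.univ.filter fun i : Fin r => α i = a I).card)
    (M : Submodule ℂ[X] (Fin n → ℂ[X]))
    (hM : ∀ t : ℂ, t ≠ 0 → substVec n t '' (M : Set (Fin n → ℂ[X])) = M)
    (hq : Nonempty (((Fin n → ℂ[X]) ⧸ M) ≃ₗ[ℂ[X]] ((Fin (n - r) → ℂ[X]) ×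
        ((i : Fin r) → ℂ[X] ⧸ Ideal.span {(X : ℂ[X]) ^ α i})))) :
    ∃ V : Fin k → Submodule ℂ (Fin n → ℂ), StrictMono V ∧
      (∀ I : Fin k, Module.finrank ℂ (V I)
        = ∑ J ∈ Finset.univ.filter (fun J : Fin k => J ≤ I), m J) ∧ MV n k a V = M := by
  have hMg := eq_gradedMod_filtOf M hM
  have hdim : ∀ d, Module.finrank ℂ (filtOf M d) =
      (Finset.univ.filter fun i : Fin r => α i ≤ d).card :=
    (quotient_iff hrn α _ (filtOf_mono M)).1 (hMg ▸ hq)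
  let V : Fin k → Submodule ℂ (Fin n → ℂ) := fun I => filtOf M (a I)
  have hVm : Monotone V := fun I J h => filtOf_mono M (ha.monotone h)
  have hVd : ∀ I : Fin k, Module.finrank ℂ (V I)
        = ∑ J ∈ Finset.univ.filter (fun J : Fin k => J ≤ I), m J := fun I => by
    rw [sum_mult_eq_card α a ha m hrange hm]
    exact hdim (a I)
  refine ⟨V, ?_, hVd, ?_⟩
  · refine hVm.strictMono_of_injective fun I J hIJ => ?_
    -- an index `J > I` contributes some `i` with `a I < α i = a J`, so the dimensions differ
    have key : ∀ I J : Fin k, I < J → V I ≠ V J := by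
      intro I J h heq
      have h1 : Module.finrank ℂ (V I) = Module.finrank ℂ (V J) := by rw [heq]
      rw [show Module.finrank ℂ (V I) = _ from hdim (a I),
        show Module.finrank ℂ (V J) = _ from hdim (a J)] at h1
      obtain ⟨i, hi⟩ : a J ∈ Set.range α := hrange ▸ Set.mem_range_self J
      refine (Finset.card_lt_card ?_).ne h1
      rw [Finset.ssubset_iff_of_subset]
      · refine ⟨i, by simp [hi], ?_⟩
        simp only [Finset.mem_filter, Finset.mem_univ, true_and, hi, not_le]
        exact ha h
      · intro x hx
        simp only [Finset.mem_filter, Finset.mem_univ, true_and] at hx ⊢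
        exact hx.trans (ha h).le
    rcases lt_trichotomy I J with h | h | h
    · exact absurd hIJ (key I J h)
    · exact h
    · exact absurd hIJ.symm (key J I h)
  · have hfilt : flagFilt a V = filtOf M := by
      ext1 d
      refine Submodule.eq_of_le_of_finrank_eq
        (iSup₂_le fun I hI => filtOf_mono M hI) ?_
      rw [finrank_flagFilt α a ha m hrange hm V hVm hVd, hdim]
    rw [MV_eq_gradedMod]
    conv_rhs => rw [hMg]
    congr 1

lemma filtOf_MV {n k : ℕ} {a : Fin k → ℕ} (ha : StrictMono a)
    {V : Fin k → Submodule ℂ (Fin n → ℂ)} (hV : Monotone V) (I : Fin k) :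
    filtOf (MV n k a V) (a I) = V I := by
  rw [MV_eq_gradedMod, filtOf_gradedMod, flagFilt_apply ha hV fun _ => Iff.rfl]

/-! ### Gluing over the Laurent polynomials -/

/-- The `ℂ[z,z⁻¹]`-submodule of `ℂ[z,z⁻¹]^{⊕n}` generated by a subspace `U` of `ℂⁿ`. -/
noncomputable def laurentExt {n : ℕ} (U : Submodule ℂ (Fin n → ℂ)) :
    Submodule (LaurentPolynomial ℂ) (Fin n → LaurentPolynomial ℂ) :=
  Submodule.span _ ((fun v j => LaurentPolynomial.C (v j)) '' (U : Set (Fin n → ℂ)))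

/-- Evaluation at `z = 1` recovers `U` from its Laurent extension. -/
lemma laurentExt_injective {n : ℕ} : Function.Injective (laurentExt (n := n)) := by
  let ev : LaurentPolynomial ℂ →+* ℂ := LaurentPolynomial.eval₂ (RingHom.id ℂ) 1
  have key : ∀ U : Submodule ℂ (Fin n → ℂ), ∀ f ∈ laurentExt U, (fun j => ev (f j)) ∈ U := by
    intro U f hf
    induction hf using Submodule.span_induction with
    | mem x hx =>
      obtain ⟨v, hv, rfl⟩ := hx
      simpa [ev] using hv
    | zero =>
      have h0 : (fun j => ev ((0 : Fin n → LaurentPolynomial ℂ) j)) = 0 := by ext j; simp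
      rw [h0]
      exact U.zero_mem
    | add x y _ _ hx hy => simpa [Pi.add_def] using U.add_mem hx hy
    | smul p x _ hx => simpa [Pi.smul_def] using U.smul_mem (ev p) hx
  have key2 : ∀ U U' : Submodule ℂ (Fin n → ℂ), laurentExt U = laurentExt U' → U ≤ U' := by
    intro U U' h v hv
    have h1 : (fun j => LaurentPolynomial.C (v j)) ∈ laurentExt U' :=
      h ▸ Submodule.subset_span ⟨v, hv, rfl⟩
    simpa [ev] using key U' _ h1
  exact fun U U' h => le_antisymm (key2 _ _ h) (key2 _ _ h.symm)

/-- Extending `M_V` along a `ℂ`-algebra map `ℂ[z] → ℂ[z,z⁻¹]` sending `z` to a unit only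
remembers the top space of the flag. -/
lemma span_image_MV {n k : ℕ} (a : Fin k → ℕ) (V : Fin k → Submodule ℂ (Fin n → ℂ))
    (hV : Monotone V) (φ : ℂ[X] →ₐ[ℂ] LaurentPolynomial ℂ) (hφ : IsUnit (φ X)) (I : Fin k)
    (hI : ∀ J, J ≤ I) :
    Submodule.span (LaurentPolynomial ℂ)
      ((fun (f : Fin n → ℂ[X]) j => φ (f j)) '' (MV n k a V : Set (Fin n → ℂ[X]))) =
      laurentExt (V I) := by
  have hmono : ∀ d v, (fun j => φ (monoVec n d v j)) =
      φ X ^ d • (fun j => LaurentPolynomial.C (v j) : Fin n → LaurentPolynomial ℂ) := by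
    intro d v
    ext1 j
    rw [monoVec_apply, ← C_mul_X_pow_eq_monomial, map_mul, map_pow, mul_comm]
    congr 1
    exact φ.commutes (v j)
  apply le_antisymm
  · rw [Submodule.span_le]
    rintro _ ⟨f, hf, rfl⟩
    have hle : MV n k a V ≤
        { carrier := {f | (fun j => φ (f j)) ∈ laurentExt (V I)}
          add_mem' := fun {f g} hf hg => by
            have := (laurentExt (V I)).add_mem hf hg
            simpa [Pi.add_def] using this
          zero_mem' := by
            have := (laurentExt (V I)).zero_mem
            simpa [Pi.zero_def] using this
          smul_mem' := fun p f hf => by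
            have := (laurentExt (V I)).smul_mem (φ p) hf
            simpa [Pi.smul_def] using this } := by
      refine MV_le a V fun J v hv => ?_
      change (fun j => φ (monoVec n (a J) v j)) ∈ laurentExt (V I)
      rw [hmono]
      exact Submodule.smul_mem _ _ (Submodule.subset_span ⟨v, hV (hI J) hv, rfl⟩)
    exact hle hf
  · refine Submodule.span_le.2 ?_
    rintro _ ⟨v, hv, rfl⟩
    have h1 : (fun j => φ (monoVec n (a I) v j)) ∈ Submodule.span (LaurentPolynomial ℂ)
        ((fun (f : Fin n → ℂ[X]) j => φ (f j)) '' (MV n k a V : Set (Fin n → ℂ[X]))) :=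
      Submodule.subset_span ⟨_, monoVec_mem_MV a V hv, rfl⟩
    rw [hmono] at h1
    exact (Submodule.smul_mem_iff_of_isUnit _ (hφ.pow (a I))).1 h1

lemma span_laurentIncl_MV {n k : ℕ} (hk : 0 < k) (a : Fin k → ℕ)
    (V : Fin k → Submodule ℂ (Fin n → ℂ)) (hV : Monotone V) :
    Submodule.span (LaurentPolynomial ℂ)
      (laurentIncl n '' (MV n k a V : Set (Fin n → ℂ[X]))) =
      laurentExt (V ⟨k - 1, Nat.sub_lt hk Nat.one_pos⟩) := by
  refine span_image_MV a V hV Polynomial.toLaurentAlg ?_ _ fun J => ?_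
  · simpa using LaurentPolynomial.isUnit_T 1
  · exact Fin.le_def.2 (Nat.le_sub_one_of_lt J.2)

lemma span_laurentInv_MV {n k : ℕ} (hk : 0 < k) (a : Fin k → ℕ)
    (V : Fin k → Submodule ℂ (Fin n → ℂ)) (hV : Monotone V) :
    Submodule.span (LaurentPolynomial ℂ)
      (laurentInv n '' (MV n k a V : Set (Fin n → ℂ[X]))) =
      laurentExt (V ⟨k - 1, Nat.sub_lt hk Nat.one_pos⟩) := by
  refine span_image_MV a V hV (Polynomial.aeval (LaurentPolynomial.T (-1))) ?_ _ fun J => ?_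
  · simpa using LaurentPolynomial.isUnit_T (-1)
  · exact Fin.le_def.2 (Nat.le_sub_one_of_lt J.2)

/-- Theorem 2.1.9: the `S¹`-fixed-point component
`F_{α₁,…,α_r;β₁,…,β_r}` of the Quot scheme is the fiber product of two flag
manifolds over `Gr_r(ℂⁿ)`: the assignment sending a pair of flags with common top
space `V_k = V′_l` to `(M_V, M_{V′})` is a bijection onto the set of pairs
`(M₀, M_∞)` of `ℂ^×`-invariant submodules with the prescribed quotient types
which glue over `ℂ[z,z⁻¹]` via `w ↦ z⁻¹`. -/
theorem fixed_point_component_is_fiber_product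
    (n r k l : ℕ) (hr : 1 ≤ r) (hrn : r ≤ n) (hk : 0 < k) (hl : 0 < l)
    (α β : Fin r → ℕ) (hα : Monotone α) (hβ : Monotone β)
    (a : Fin k → ℕ) (ha : StrictMono a) (m : Fin k → ℕ)
    (hrangea : Set.range α = Set.range a)
    (hm : ∀ I : Fin k, m I = (Finset.univ.filter fun i : Fin r => α i = a I).card)
    (b : Fin l → ℕ) (hb : StrictMono b) (nn : Fin l → ℕ)
    (hrangeb : Set.range β = Set.range b)
    (hn : ∀ J : Fin l, nn J = (Finset.univ.filter fun i : Fin r => β i = b J).card) :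
    Set.BijOn
      (fun V : (Fin k → Submodule ℂ (Fin n → ℂ)) × (Fin l → Submodule ℂ (Fin n → ℂ)) =>
        (MV n k a V.1, MV n l b V.2))
      {V | StrictMono V.1 ∧
           (∀ I : Fin k, Module.finrank ℂ (V.1 I)
              = ∑ J ∈ Finset.univ.filter (fun J : Fin k => J ≤ I), m J) ∧
           StrictMono V.2 ∧
           (∀ J : Fin l, Module.finrank ℂ (V.2 J)
              = ∑ J' ∈ Finset.univ.filter (fun J' : Fin l => J' ≤ J), nn J') ∧
           V.1 ⟨k - 1, Nat.sub_lt hk Nat.one_pos⟩ = V.2 ⟨l - 1, Nat.sub_lt hl Nat.one_pos⟩}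
      {Mp : Submodule (Polynomial ℂ) (Fin n → Polynomial ℂ) ×
            Submodule (Polynomial ℂ) (Fin n → Polynomial ℂ) |
        (∀ t : ℂ, t ≠ 0 → substVec n t '' (Mp.1 : Set (Fin n → Polynomial ℂ)) = Mp.1) ∧
        (∀ t : ℂ, t ≠ 0 → substVec n t '' (Mp.2 : Set (Fin n → Polynomial ℂ)) = Mp.2) ∧
        Nonempty
          (((Fin n → Polynomial ℂ) ⧸ Mp.1) ≃ₗ[Polynomial ℂ]
            ((Fin (n - r) → Polynomial ℂ) ×
              ((i : Fin r) → Polynomial ℂ ⧸ Ideal.span {(Polynomial.X : Polynomial ℂ) ^ α i}))) ∧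
        Nonempty
          (((Fin n → Polynomial ℂ) ⧸ Mp.2) ≃ₗ[Polynomial ℂ]
            ((Fin (n - r) → Polynomial ℂ) ×
              ((i : Fin r) → Polynomial ℂ ⧸ Ideal.span {(Polynomial.X : Polynomial ℂ) ^ β i}))) ∧
        Submodule.span (LaurentPolynomial ℂ)
            (laurentIncl n '' (Mp.1 : Set (Fin n → Polynomial ℂ)))
          = Submodule.span (LaurentPolynomial ℂ)
              (laurentInv n '' (Mp.2 : Set (Fin n → Polynomial ℂ)))} := by
  refine ⟨?_, ?_, ?_⟩
  · rintro ⟨V, V'⟩ ⟨hV, hVd, hV', hVd', htop⟩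
    refine ⟨substVec_MV a V, substVec_MV b V',
      quotient_MV hrn α a ha m hrangea hm V hV.monotone hVd,
      quotient_MV hrn β b hb nn hrangeb hn V' hV'.monotone hVd', ?_⟩
    dsimp only at htop ⊢
    rw [span_laurentIncl_MV hk a V hV.monotone, span_laurentInv_MV hl b V' hV'.monotone, htop]
  · rintro ⟨V, V'⟩ ⟨hV, -, hV', -, -⟩ ⟨U, U'⟩ ⟨hU, -, hU', -, -⟩ h
    obtain ⟨h1, h2⟩ := Prod.mk.inj h
    dsimp only at hV hV' hU hU' h1 h2
    refine Prod.ext (funext fun I => ?_) (funext fun J => ?_)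
    · change V I = U I
      rw [← filtOf_MV ha hV.monotone I, h1, filtOf_MV ha hU.monotone I]
    · change V' J = U' J
      rw [← filtOf_MV hb hV'.monotone J, h2, filtOf_MV hb hU'.monotone J]
  · rintro ⟨M, M'⟩ ⟨hM, hM', hq, hq', hglue⟩
    obtain ⟨V, hV, hVd, rfl⟩ := exists_flag hrn α a ha m hrangea hm M hM hq
    obtain ⟨V', hV', hVd', rfl⟩ := exists_flag hrn β b hb nn hrangeb hn M' hM' hq'
    refine ⟨(V, V'), ⟨hV, hVd, hV', hVd', ?_⟩, rfl⟩
    dsimp only at hglue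
    rw [span_laurentIncl_MV hk a V hV.monotone, span_laurentInv_MV hl b V' hV'.monotone] at hglue
    exact laurentExt_injective hglue
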